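/- The homogeneous coordinate ring of the Grassmannian G(2,n), i.e., ℂ[T_{ij} : 1 ≤ i < j ≤ n] modulo the Plücker ideal, is a unique factorization domain for n ≥ 4. -/

import Mathlib

open MvPolynomial

/-- Index set for the Plücker variables `T_{ij}`, `i < j`. -/
abbrev PIdx (n : ℕ) := {p : Fin n × Fin n // p.1 < p.2}

/-- The variable `T_{ij}`. -/
noncomputable def Tv {K : Type*} [CommRing K] {n : ℕ} (i j : Fin n) (h : i < j) :
    MvPolynomial (PIdx n) K := X ⟨(i, j), h⟩

/-- The Plücker relation `P_{ijkl} = T_{ij}T_{kl} - T_{ik}T_{jl} + T_{il}T_{jk}`. -/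
noncomputable def pluck {K : Type*} [CommRing K] {n : ℕ} (i j k l : Fin n)
    (hij : i < j) (hjk : j < k) (hkl : k < l) : MvPolynomial (PIdx n) K :=
  Tv i j hij * Tv k l hkl - Tv i k (hij.trans hjk) * Tv j l (hjk.trans hkl)
    + Tv i l (hij.trans (hjk.trans hkl)) * Tv j k hjk

/-- The set of all Plücker relations. -/
def pluckerSet (K : Type*) [CommRing K] (n : ℕ) : Set (MvPolynomial (PIdx n) K) :=
  {P | ∃ (i j k l : Fin n) (hij : i < j) (hjk : j < k) (hkl : k < l),
    P = pluck i j k l hij hjk hkl}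


section Nagata

/-- Nagata's criterion for a ring that agrees with a factorial subring after inverting a prime. -/
theorem UniqueFactorizationMonoid.of_injective_of_exists_pow_mul {B R : Type*}
    [CommRing B] [IsDomain B] [UniqueFactorizationMonoid B]
    [CommRing R] [IsDomain R] [IsNoetherianRing R] (f : B →+* R) (hf : Function.Injective f)
    {b : B} (hb : Prime (f b)) (h : ∀ r, ∃ m c, f b ^ m * r = f c) :
    UniqueFactorizationMonoid R := by
  rw [UniqueFactorizationMonoid.iff_localizationAway_of_prime hb]
  let L := Localization.Away (f b)
  let : Algebra B L := ((algebraMap R L).comp f).toAlgebra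
  have hinj : Function.Injective (algebraMap R L) :=
    IsLocalization.injective L (powers_le_nonZeroDivisors_of_noZeroDivisors hb.ne_zero)
  have halg : ∀ c : B, algebraMap B L c = algebraMap R L (f c) := fun _ ↦ rfl
  have : IsLocalization (Submonoid.powers b) L := by
    refine ⟨⟨?_, ?_, ?_⟩⟩
    · rintro ⟨_, k, rfl⟩
      simp only [halg, map_pow]
      exact (IsLocalization.Away.algebraMap_isUnit (f b)).pow k
    · intro z
      obtain ⟨⟨r, ⟨_, k, rfl⟩⟩, hz⟩ := IsLocalization.surj (Submonoid.powers (f b)) z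
      obtain ⟨m, c, hc⟩ := h r
      refine ⟨⟨c, ⟨b ^ (k + m), k + m, rfl⟩⟩, ?_⟩
      simp only [halg, ← hc] at hz ⊢
      simp only [map_mul, ← hz, map_pow]
      ring
    · intro x y hxy
      exact ⟨1, by rw [hf (hinj hxy)]⟩
  exact UniqueFactorizationMonoid.of_isLocalization (Submonoid.powers b) L

end Nagata

section Straightening

/-- The pair `p` is strictly nested around the pair `q`. -/
def PIdx.Nests {n : ℕ} (p q : PIdx n) : Prop := p.1.1 < q.1.1 ∧ q.1.2 < p.1.2

/-- An exponent vector is standard if no two pairs in its support are nested and all of them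
end at `m` or later. -/
def IsStandard {n : ℕ} (m : ℕ) (d : PIdx n →₀ ℕ) : Prop :=
  (∀ p ∈ d.support, m ≤ p.1.2.val) ∧ ∀ p ∈ d.support, ∀ q ∈ d.support, ¬ p.Nests q

theorem IsStandard.mono {n m : ℕ} {d e : PIdx n →₀ ℕ} (hd : IsStandard m d) (h : e ≤ d) :
    IsStandard m e :=
  have hs := Finsupp.support_mono h
  ⟨fun p hp ↦ hd.1 p (hs hp), fun p hp q hq ↦ hd.2 p (hs hp) q (hs hq)⟩

/-- The ideal of the Plücker relations and of the variables `T_{ij}` with `j < m`. -/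
noncomputable def schubertIdeal (K : Type*) [CommRing K] (n m : ℕ) : Ideal (MvPolynomial (PIdx n) K) :=
  Ideal.span (pluckerSet K n ∪ {P | ∃ p : PIdx n, p.1.2.val < m ∧ P = X p})

/-- The sum of squared lengths of the pairs in an exponent vector. -/
noncomputable def squaredLength {n : ℕ} : (PIdx n →₀ ℕ) →ₗ[ℕ] ℕ :=
  Finsupp.linearCombination ℕ fun p ↦ (p.1.2.val - p.1.1.val) ^ 2

theorem monomial_mem_schubertIdeal_sup_restrictSupport {K : Type*} [CommRing K] {n : ℕ} (m : ℕ)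
    (d : PIdx n →₀ ℕ) :
    monomial d (1 : K) ∈ (schubertIdeal K n m).restrictScalars K ⊔
      restrictSupport K {d | IsStandard m d} := by
  induction hN : squaredLength d using Nat.strong_induction_on generalizing d with
  | _ N ih =>
  by_cases hd : IsStandard m d
  · exact Submodule.mem_sup_right ((monomial_mem_restrictSupport K).2 (Or.inl hd))
  simp only [IsStandard, not_and_or, not_forall, not_not, not_le] at hd
  obtain ⟨p, hp, hpm⟩ | ⟨p, hp, q, hq, hpq⟩ := hd
  · refine Submodule.mem_sup_left ?_
    have hle : Finsupp.single p 1 ≤ d := by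
      simpa [Nat.one_le_iff_ne_zero] using hp
    rw [← tsub_add_cancel_of_le hle, ← mul_one (1 : K), ← monomial_mul]
    exact Ideal.mul_mem_left _ _ (Ideal.subset_span (Or.inr ⟨p, hpm, rfl⟩))
  · obtain ⟨⟨⟨i, j⟩, hij⟩, ⟨⟨k, l⟩, hkl⟩⟩ := p, q
    obtain ⟨hik, hlj⟩ := hpq
    dsimp only at hij hkl hik hlj
    set p : PIdx n := ⟨(i, j), hij⟩
    set q : PIdx n := ⟨(k, l), hkl⟩
    have hne : p ≠ q := fun h ↦ hik.ne (congrArg (fun p : PIdx n ↦ p.1.1) h)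
    have hle : Finsupp.single p 1 + Finsupp.single q 1 ≤ d := by
      intro r
      simp only [Finsupp.mem_support_iff] at hp hq
      simp only [Finsupp.add_apply, Finsupp.single_apply]
      split_ifs with h1 h2 h2
      · exact absurd (h1.trans h2.symm) hne
      · subst h1; omega
      · subst h2; omega
      · omega
    obtain ⟨e, rfl⟩ := exists_add_of_le hle
    let a₁ : PIdx n := ⟨(i, l), hik.trans hkl⟩
    let a₂ : PIdx n := ⟨(k, j), hkl.trans hlj⟩
    let b₁ : PIdx n := ⟨(i, k), hik⟩
    let b₂ : PIdx n := ⟨(l, j), hlj⟩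
    have hmon : ∀ s t : PIdx n, monomial (Finsupp.single s 1 + Finsupp.single t 1 + e) (1 : K) =
        X s * X t * monomial e 1 := by
      intro s t
      simp [X]
    have key : monomial (Finsupp.single p 1 + Finsupp.single q 1 + e) (1 : K) =
        monomial e 1 * pluck i k l j hik hkl hlj +
        (monomial (Finsupp.single a₁ 1 + Finsupp.single a₂ 1 + e) (1 : K) -
          monomial (Finsupp.single b₁ 1 + Finsupp.single b₂ 1 + e) (1 : K)) := by
      simp only [hmon, pluck, Tv, p, q, a₁, a₂, b₁, b₂]
      ring
    have hlen : ∀ s t : PIdx n, squaredLength (Finsupp.single s 1 + Finsupp.single t 1 + e) =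
        (s.1.2.val - s.1.1.val) ^ 2 + (t.1.2.val - t.1.1.val) ^ 2 + squaredLength e := by
      intro s t
      simp [squaredLength]
    rw [hlen] at hN
    rw [Fin.lt_def] at hik hkl hlj
    obtain ⟨u, hu⟩ := Nat.exists_eq_add_of_lt hik
    obtain ⟨v, hv⟩ := Nat.exists_eq_add_of_lt hkl
    obtain ⟨w, hw⟩ := Nat.exists_eq_add_of_lt hlj
    rw [key]
    refine Submodule.add_mem _ (Submodule.mem_sup_left ?_) (Submodule.sub_mem _
      (ih _ ?_ _ rfl) (ih _ ?_ _ rfl))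
    · exact Ideal.mul_mem_left _ _ (Ideal.subset_span (Or.inl ⟨i, k, l, j, _, _, _, rfl⟩))
    · rw [hlen, ← hN]
      simp only [p, q, a₁, a₂]
      rw [show l.val - i.val = u + v + 2 by omega, show j.val - k.val = v + w + 2 by omega,
        show j.val - i.val = u + v + w + 3 by omega, show l.val - k.val = v + 1 by omega]
      nlinarith [Nat.zero_le (u * w)]
    · rw [hlen, ← hN]
      simp only [p, q, b₁, b₂]
      rw [show k.val - i.val = u + 1 by omega, show j.val - l.val = w + 1 by omega,
        show j.val - i.val = u + v + w + 3 by omega, show l.val - k.val = v + 1 by omega]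
      nlinarith [Nat.zero_le (u * w), Nat.zero_le (u * v), Nat.zero_le (v * w)]

theorem exists_isStandard_sub_mem_schubertIdeal {K : Type*} [CommRing K] {n : ℕ} (m : ℕ)
    (f : MvPolynomial (PIdx n) K) :
    ∃ g, (∀ d ∈ g.support, IsStandard m d) ∧ f - g ∈ schubertIdeal K n m := by
  have hf : f ∈ (schubertIdeal K n m).restrictScalars K ⊔
      restrictSupport K {d | IsStandard m d} := by
    rw [f.as_sum]
    refine Submodule.sum_mem _ fun d _ ↦ ?_
    have := Submodule.smul_mem _ (f.coeff d) (monomial_mem_schubertIdeal_sup_restrictSupport (K := K) m d)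
    rwa [smul_monomial, smul_eq_mul, mul_one] at this
  obtain ⟨a, ha, g, hg, rfl⟩ := Submodule.mem_sup.1 hf
  exact ⟨g, fun d hd ↦ hg hd, by simpa using ha⟩

end Straightening

section Independence

/-- The homomorphism sending `T_{ij}` to the minor `x_i y_j - x_j y_i`. -/
noncomputable def minorHom (K : Type*) [CommRing K] {A : Type*} [CommRing A] [Algebra K A] {n : ℕ}
    (x y : Fin n → A) : MvPolynomial (PIdx n) K →ₐ[K] A :=
  aeval fun p ↦ x p.1.1 * y p.1.2 - x p.1.2 * y p.1.1

theorem span_pluckerSet_le_ker_minorHom {K : Type*} [CommRing K] {A : Type*} [CommRing A]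
    [Algebra K A] {n : ℕ} (x y : Fin n → A) :
    Ideal.span (pluckerSet K n) ≤ RingHom.ker (minorHom K x y) := by
  refine Ideal.span_le.2 ?_
  rintro _ ⟨i, j, k, l, hij, hjk, hkl, rfl⟩
  simp only [SetLike.mem_coe, RingHom.mem_ker, minorHom, pluck, Tv, map_add, map_sub, map_mul,
    aeval_X]
  ring

/-- The minors of the generic `2 × n` matrix whose second row has been replaced by `0` in the
columns before `m`. -/
noncomputable def genericMinorHom (K : Type*) [CommRing K] (n m : ℕ) :
    MvPolynomial (PIdx n) K →ₐ[K] MvPolynomial (Fin n ⊕ₗ Fin n) K :=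
  minorHom K (fun i ↦ X (Sum.inlₗ i)) fun j ↦ if j.val < m then 0 else X (Sum.inrₗ j)

theorem schubertIdeal_le_ker_genericMinorHom {K : Type*} [CommRing K] (n m : ℕ) :
    schubertIdeal K n m ≤ RingHom.ker (genericMinorHom K n m) := by
  rw [schubertIdeal, Ideal.span_union]
  refine sup_le (span_pluckerSet_le_ker_minorHom _ _) (Ideal.span_le.2 ?_)
  rintro _ ⟨p, hp, rfl⟩
  have hp' : p.1.1.val < m := lt_trans p.2 hp
  simp [genericMinorHom, minorHom, hp, hp']

/-- The exponent of `∏ x_i y_j` over the pairs `(i, j)` in an exponent vector. -/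
noncomputable def diagonalExponent {n : ℕ} : (PIdx n →₀ ℕ) →ₗ[ℕ] (Fin n ⊕ₗ Fin n →₀ ℕ) :=
  Finsupp.linearCombination ℕ fun p ↦
    Finsupp.single (Sum.inlₗ p.1.1) 1 + Finsupp.single (Sum.inrₗ p.1.2) 1

theorem diagonalExponent_inl_ne_zero_iff {n : ℕ} {d : PIdx n →₀ ℕ} {i : Fin n} :
    diagonalExponent d (Sum.inlₗ i) ≠ 0 ↔ ∃ p ∈ d.support, p.1.1 = i := by
  simp only [diagonalExponent, Finsupp.linearCombination_apply, Finsupp.sum,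
    Finsupp.finsetSum_apply, ne_eq, Finset.sum_eq_zero_iff, not_forall]
  refine exists_congr fun p ↦ ?_
  simp [Finsupp.single_apply, and_comm]

theorem diagonalExponent_inr_ne_zero_iff {n : ℕ} {d : PIdx n →₀ ℕ} {j : Fin n} :
    diagonalExponent d (Sum.inrₗ j) ≠ 0 ↔ ∃ p ∈ d.support, p.1.2 = j := by
  simp only [diagonalExponent, Finsupp.linearCombination_apply, Finsupp.sum,
    Finsupp.finsetSum_apply, ne_eq, Finset.sum_eq_zero_iff, not_forall]
  refine exists_congr fun p ↦ ?_
  simp [Finsupp.single_apply, and_comm]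

theorem IsStandard.exists_least {n m : ℕ} {d : PIdx n →₀ ℕ} (hd : IsStandard m d) (h0 : d ≠ 0) :
    ∃ p ∈ d.support, ∀ q ∈ d.support, p.1.1 ≤ q.1.1 ∧ p.1.2 ≤ q.1.2 := by
  obtain ⟨p, hp, hmin⟩ := d.support.exists_min_image (fun p ↦ p.1.1.val + p.1.2.val)
    (Finsupp.support_nonempty_iff.2 h0)
  refine ⟨p, hp, fun q hq ↦ ?_⟩
  have h1 := hd.2 p hp q hq
  have h2 := hd.2 q hq p hp
  have h3 := hmin q hq
  simp only [PIdx.Nests, Fin.lt_def, Fin.le_def] at *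
  omega

theorem IsStandard.eq_zero_of_disjoint {n m : ℕ} {d e : PIdx n →₀ ℕ} (hd : IsStandard m d)
    (he : IsStandard m e) (h : diagonalExponent d = diagonalExponent e)
    (hdisj : Disjoint d.support e.support) : d = 0 := by
  by_contra h0
  obtain ⟨p, hp, hpmin⟩ := hd.exists_least h0
  have h0' : e ≠ 0 := by
    rintro rfl
    have := diagonalExponent_inl_ne_zero_iff.2 ⟨p, hp, rfl⟩
    simp [h] at this
  obtain ⟨q, hq, hqmin⟩ := he.exists_least h0'
  obtain ⟨a, ha, hap⟩ := diagonalExponent_inl_ne_zero_iff.1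
    (h ▸ diagonalExponent_inl_ne_zero_iff.2 ⟨p, hp, rfl⟩)
  obtain ⟨b, hb, hbp⟩ := diagonalExponent_inr_ne_zero_iff.1
    (h ▸ diagonalExponent_inr_ne_zero_iff.2 ⟨p, hp, rfl⟩)
  obtain ⟨a', ha', haq⟩ := diagonalExponent_inl_ne_zero_iff.1
    (h.symm ▸ diagonalExponent_inl_ne_zero_iff.2 ⟨q, hq, rfl⟩)
  obtain ⟨b', hb', hbq⟩ := diagonalExponent_inr_ne_zero_iff.1
    (h.symm ▸ diagonalExponent_inr_ne_zero_iff.2 ⟨q, hq, rfl⟩)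
  have hpq : p = q := Subtype.ext <| Prod.ext
    (le_antisymm (haq ▸ (hpmin a' ha').1) (hap ▸ (hqmin a ha).1))
    (le_antisymm (hbq ▸ (hpmin b' hb').2) (hbp ▸ (hqmin b hb).2))
  exact Finset.disjoint_left.1 hdisj hp (hpq ▸ hq)

theorem injOn_diagonalExponent {n m : ℕ} :
    Set.InjOn diagonalExponent {d : PIdx n →₀ ℕ | IsStandard m d} := by
  intro d hd e he h
  have hd' : d - d ⊓ e + d ⊓ e = d := tsub_add_cancel_of_le inf_le_left
  have he' : e - d ⊓ e + d ⊓ e = e := tsub_add_cancel_of_le inf_le_right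
  have h' : diagonalExponent (d - d ⊓ e) = diagonalExponent (e - d ⊓ e) := by
    rw [← hd', ← he', map_add, map_add] at h
    simpa [hd', he'] using h
  have hdisj : Disjoint (d - d ⊓ e).support (e - d ⊓ e).support := by
    refine Finset.disjoint_left.2 fun p hp hq ↦ ?_
    simp only [Finsupp.mem_support_iff, Finsupp.tsub_apply, Finsupp.inf_apply] at hp hq
    omega
  have hsd := IsStandard.mono hd (tsub_le_self : d - d ⊓ e ≤ d)
  have hse := IsStandard.mono he (tsub_le_self : e - d ⊓ e ≤ e)
  rw [hsd.eq_zero_of_disjoint hse h' hdisj] at hd'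
  rw [hse.eq_zero_of_disjoint hsd h'.symm hdisj.symm] at he'
  exact hd'.symm.trans he'

open MonomialOrder in
theorem monic_degree_genericMinorHom_X {K : Type*} [Field K] {n m : ℕ} {p : PIdx n}
    (hp : m ≤ p.1.2.val) :
    lex.Monic (genericMinorHom K n m (X p)) ∧ lex.degree (genericMinorHom K n m (X p)) =
      Finsupp.single (Sum.inlₗ p.1.1) 1 + Finsupp.single (Sum.inrₗ p.1.2) 1 := by
  classical
  obtain ⟨⟨i, j⟩, hij⟩ := p
  dsimp only at hij hp ⊢
  have hX : ∀ a b : Fin n ⊕ₗ Fin n, (X a * X b : MvPolynomial _ K) =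
      monomial (Finsupp.single a 1 + Finsupp.single b 1) 1 := by
    intro a b
    simp [X, monomial_mul]
  simp only [genericMinorHom, minorHom, aeval_X, not_lt.2 hp, if_false]
  split_ifs with hi
  · rw [mul_zero, sub_zero, hX, degree_monomial, if_neg one_ne_zero]
    exact ⟨monic_monomial_one, rfl⟩
  · have hlt : lex.degree (X (Sum.inlₗ j) * X (Sum.inrₗ i) : MvPolynomial (Fin n ⊕ₗ Fin n) K) ≺[lex]
        lex.degree (X (Sum.inlₗ i) * X (Sum.inrₗ j) : MvPolynomial (Fin n ⊕ₗ Fin n) K) := by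
      rw [hX, hX, degree_monomial, degree_monomial, if_neg one_ne_zero, if_neg one_ne_zero,
        lex_lt_iff, Finsupp.Lex.lt_iff]
      refine ⟨Sum.inlₗ i, fun k hk ↦ ?_, ?_⟩
      · have h1 : Sum.inlₗ i ≠ k := hk.ne'
        have h2 : Sum.inlₗ j ≠ k := (hk.trans (Sum.Lex.inl_lt_inl_iff.2 hij)).ne'
        have h3 : ∀ l : Fin n, Sum.inrₗ l ≠ k := fun l ↦
          (hk.trans (Sum.Lex.inl_lt_inr i l)).ne'
        simp [h1, h2, h3]
      · simp [hij.ne']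
    rw [degree_sub_of_lt hlt, Monic, leadingCoeff_sub_of_lt hlt, hX, degree_monomial,
      if_neg one_ne_zero]
    exact ⟨monic_monomial_one, rfl⟩

open MonomialOrder in
theorem monic_degree_genericMinorHom_monomial {K : Type*} [Field K] {n m : ℕ}
    {d : PIdx n →₀ ℕ} (hd : ∀ p ∈ d.support, m ≤ p.1.2.val) :
    lex.Monic (genericMinorHom K n m (monomial d 1)) ∧
      lex.degree (genericMinorHom K n m (monomial d 1)) = diagonalExponent d := by
  have hX p (hp : p ∈ d.support) := monic_degree_genericMinorHom_X (K := K) (hd p hp)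
  have hmonic p (hp : p ∈ d.support) :
      lex.Monic (genericMinorHom K n m (X p) ^ d p) := by
    rw [Monic, leadingCoeff_pow, (hX p hp).1.leadingCoeff_eq_one, one_pow]
  rw [monomial_eq, C_1, one_mul, Finsupp.prod, map_prod]
  simp only [map_pow]
  refine ⟨Monic.prod hmonic, ?_⟩
  rw [degree_prod fun p hp ↦ (hmonic p hp).ne_zero, diagonalExponent,
    Finsupp.linearCombination_apply, Finsupp.sum]
  exact Finset.sum_congr rfl fun p hp ↦ by rw [degree_pow, (hX p hp).2]

open MonomialOrder in
theorem eq_zero_of_genericMinorHom_eq_zero {K : Type*} [Field K] {n m : ℕ}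
    {g : MvPolynomial (PIdx n) K} (hg : ∀ d ∈ g.support, IsStandard m d)
    (h : genericMinorHom K n m g = 0) : g = 0 := by
  by_contra h0
  obtain ⟨d, hd, hmax⟩ := g.support.exists_max_image
    (fun d ↦ lex.toSyn (diagonalExponent d)) (support_nonempty.2 h0)
  have hlead e (he : e ∈ g.support) :=
    monic_degree_genericMinorHom_monomial (K := K) (hg e he).1
  have hcoeff : (genericMinorHom K n m g).coeff (diagonalExponent d) = g.coeff d := by
    have hsum : genericMinorHom K n m g =
        ∑ e ∈ g.support, g.coeff e • genericMinorHom K n m (monomial e 1) := by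
      conv_lhs => rw [g.as_sum, map_sum]
      exact Finset.sum_congr rfl fun e _ ↦ by rw [← map_smul, smul_monomial, smul_eq_mul, mul_one]
    rw [hsum, coeff_sum, Finset.sum_eq_single_of_mem d hd]
    · rw [coeff_smul, ← (hlead d hd).2, (hlead d hd).1.coeff_degree, smul_eq_mul, mul_one]
    · intro e he hed
      refine (coeff_smul ..).trans ?_
      have hlt : lex.degree (genericMinorHom K n m (monomial e 1)) ≺[lex] diagonalExponent d := by
        rw [(hlead e he).2]
        exact lt_of_le_of_ne (hmax e he) fun heq ↦
          hed (injOn_diagonalExponent (hg e he) (hg d hd) (lex.toSyn.injective heq))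
      rw [coeff_eq_zero_of_lt hlt, smul_zero]
  rw [h, coeff_zero] at hcoeff
  exact mem_support_iff.1 hd hcoeff.symm

theorem ker_genericMinorHom {K : Type*} [Field K] (n m : ℕ) :
    RingHom.ker (genericMinorHom K n m) = schubertIdeal K n m := by
  refine le_antisymm (fun f hf ↦ ?_) (schubertIdeal_le_ker_genericMinorHom n m)
  obtain ⟨g, hg, hfg⟩ := exists_isStandard_sub_mem_schubertIdeal m f
  have h := schubertIdeal_le_ker_genericMinorHom n m hfg
  rw [RingHom.mem_ker] at hf h
  rw [map_sub, hf, zero_sub, neg_eq_zero] at h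
  simpa [eq_zero_of_genericMinorHom_eq_zero hg h] using hfg

theorem isPrime_schubertIdeal {K : Type*} [Field K] (n m : ℕ) :
    (schubertIdeal K n m).IsPrime :=
  ker_genericMinorHom (K := K) n m ▸ RingHom.ker_isPrime _

theorem schubertIdeal_zero {K : Type*} [CommRing K] (n : ℕ) :
    schubertIdeal K n 0 = Ideal.span (pluckerSet K n) := by
  simp [schubertIdeal]

end Independence

section Factoriality

variable {K : Type*} [Field K] {n : ℕ}

theorem minorHom_X {A : Type*} [CommRing A] [Algebra K A] (x y : Fin n → A) (p : PIdx n) :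
    minorHom K x y (X p) = x p.1.1 * y p.1.2 - x p.1.2 * y p.1.1 :=
  aeval_X _ _

/-- The map from the polynomial ring in the Plücker variables `T_{ij}` with `i < 2` to the
Plücker algebra. -/
noncomputable def firstRowsHom (K : Type*) [Field K] (n : ℕ) :
    MvPolynomial {p : PIdx n // p.1.1.val < 2} K →ₐ[K]
      MvPolynomial (PIdx n) K ⧸ Ideal.span (pluckerSet K n) :=
  (Ideal.Quotient.mkₐ K _).comp (rename Subtype.val)

theorem firstRowsHom_X (p : {p : PIdx n // p.1.1.val < 2}) :
    firstRowsHom K n (X p) = Ideal.Quotient.mk _ (X p.1) := by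
  simp [firstRowsHom]

/-- The pair `(0, 1)`. -/
def PIdx.zeroOne (hn : 2 ≤ n) : PIdx n := ⟨(⟨0, by omega⟩, ⟨1, by omega⟩), by simp⟩

theorem firstRowsHom_injective (hn : 2 ≤ n) : Function.Injective (firstRowsHom K n) := by
  let B := MvPolynomial {p : PIdx n // p.1.1.val < 2} K
  let F := FractionRing B
  let T (i j : Fin n) : F :=
    if h : i < j ∧ i.val < 2 then algebraMap B F (X ⟨⟨(i, j), h.1⟩, h.2⟩) else 0
  let z : Fin n := ⟨0, by omega⟩
  let o : Fin n := ⟨1, by omega⟩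
  have hzo : T z o ≠ 0 := by
    simp only [T]
    rw [dif_pos (by simp [z, o])]
    exact (map_ne_zero_iff _ (IsFractionRing.injective B F)).2 (X_ne_zero _)
  let x (i : Fin n) : F := if i = z then 1 else if i = o then 0 else -T o i / T z o
  let y (i : Fin n) : F := if i = z then 0 else T z i
  have hX (p : {p : PIdx n // p.1.1.val < 2}) :
      minorHom K x y (X p.1) = algebraMap B F (X p) := by
    obtain ⟨⟨⟨i, j⟩, hij⟩, hi⟩ := p
    have hT : algebraMap B F (X ⟨⟨(i, j), hij⟩, hi⟩) = T i j := by
      simp only [T]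
      rw [dif_pos ⟨hij, hi⟩]
    rw [hT, minorHom_X]
    dsimp only at hij hi ⊢
    have hjz : j ≠ z := (lt_of_le_of_lt (Fin.le_def.2 (Nat.zero_le _)) hij).ne'
    obtain rfl | rfl : i = z ∨ i = o := by
      simp only [Fin.ext_iff, z, o]
      omega
    · simp [x, y, hjz]
    · have hoz : o ≠ z := by simp [o, z]
      simp only [x, y, hjz, hoz, hij.ne', if_true, if_false]
      rw [div_mul_cancel₀ _ hzo]
      ring
  let φ := Ideal.Quotient.liftₐ (Ideal.span (pluckerSet K n)) (minorHom K x y)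
    fun a ha ↦ span_pluckerSet_le_ker_minorHom x y ha
  have hφ : φ.comp (firstRowsHom K n) = IsScalarTower.toAlgHom K B F := by
    refine MvPolynomial.algHom_ext fun p ↦ ?_
    rw [AlgHom.comp_apply, firstRowsHom_X]
    exact hX p
  refine Function.Injective.of_comp (f := φ) ?_
  rw [← AlgHom.coe_comp, hφ]
  exact IsFractionRing.injective B F

theorem exists_pow_mul_eq_firstRowsHom (hn : 2 ≤ n)
    (r : MvPolynomial (PIdx n) K ⧸ Ideal.span (pluckerSet K n)) :
    ∃ m c, firstRowsHom K n (X ⟨PIdx.zeroOne hn, Nat.zero_lt_two⟩) ^ m * r =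
      firstRowsHom K n c := by
  obtain ⟨f, rfl⟩ := Ideal.Quotient.mk_surjective r
  induction f using MvPolynomial.induction_on with
  | C a => exact ⟨0, C a, by simp [firstRowsHom]; rfl⟩
  | add f g hf hg =>
    obtain ⟨k, c, hc⟩ := hf
    obtain ⟨l, d, hd⟩ := hg
    refine ⟨k + l, X ⟨PIdx.zeroOne hn, Nat.zero_lt_two⟩ ^ l * c +
      X ⟨PIdx.zeroOne hn, Nat.zero_lt_two⟩ ^ k * d, ?_⟩
    rw [map_add, map_add, map_mul, map_mul, ← hc, ← hd, map_pow, map_pow]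
    ring
  | mul_X f p hf =>
    obtain ⟨k, c, hc⟩ := hf
    suffices h : ∃ d, firstRowsHom K n (X ⟨PIdx.zeroOne hn, Nat.zero_lt_two⟩) *
        Ideal.Quotient.mk _ (X p) = firstRowsHom K n d by
      obtain ⟨d, hd⟩ := h
      refine ⟨k + 1, c * d, ?_⟩
      rw [map_mul, map_mul, ← hc, ← hd]
      ring
    by_cases hp : p.1.1.val < 2
    · exact ⟨X ⟨PIdx.zeroOne hn, Nat.zero_lt_two⟩ * X ⟨p, hp⟩, by
        rw [map_mul, firstRowsHom_X ⟨p, hp⟩]⟩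
    · obtain ⟨⟨i, j⟩, hij⟩ := p
      dsimp only at hij hp
      let z : Fin n := ⟨0, by omega⟩
      let o : Fin n := ⟨1, by omega⟩
      have hzo : z < o := by simp [z, o]
      have hoi : o < i := by rw [Fin.lt_def]; simp only [o]; omega
      refine ⟨X ⟨⟨(z, i), hzo.trans hoi⟩, by simp [z]⟩ * X ⟨⟨(o, j), hoi.trans hij⟩, by simp [o]⟩ -
        X ⟨⟨(z, j), hzo.trans (hoi.trans hij)⟩, by simp [z]⟩ * X ⟨⟨(o, i), hoi⟩, by simp [o]⟩, ?_⟩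
      simp only [map_sub, map_mul, firstRowsHom_X]
      rw [← map_mul, ← map_mul, ← map_mul, ← map_sub, Ideal.Quotient.eq]
      refine Ideal.subset_span ⟨z, o, i, j, hzo, hoi, hij, ?_⟩
      simp only [pluck, Tv, PIdx.zeroOne, z, o]
      ring

theorem isDomain_quotient_pluckerSet :
    IsDomain (MvPolynomial (PIdx n) K ⧸ Ideal.span (pluckerSet K n)) := by
  have := isPrime_schubertIdeal (K := K) n 0
  rw [schubertIdeal_zero] at this
  exact Ideal.Quotient.isDomain _

theorem prime_mk_X_zeroOne (hn : 2 ≤ n) :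
    Prime (Ideal.Quotient.mk (Ideal.span (pluckerSet K n)) (X (PIdx.zeroOne hn))) := by
  have h0 : Ideal.Quotient.mk (Ideal.span (pluckerSet K n)) (X (PIdx.zeroOne hn)) ≠ 0 := by
    rw [← firstRowsHom_X ⟨PIdx.zeroOne hn, Nat.zero_lt_two⟩]
    exact (map_ne_zero_iff _ (firstRowsHom_injective hn)).2 (X_ne_zero _)
  have hset : {P | ∃ p : PIdx n, p.1.2.val < 2 ∧ P = (X p : MvPolynomial (PIdx n) K)} =
      {X (PIdx.zeroOne hn)} := by
    ext P
    constructor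
    · rintro ⟨⟨⟨i, j⟩, hij⟩, hj, rfl⟩
      rw [Fin.lt_def] at hij
      dsimp only at hij hj
      have hp : (⟨(i, j), hij⟩ : PIdx n) = PIdx.zeroOne hn :=
        Subtype.ext (Prod.ext (Fin.ext (by simp only [PIdx.zeroOne]; omega))
          (Fin.ext (by simp only [PIdx.zeroOne]; omega)))
      rw [hp]
      rfl
    · rintro rfl
      exact ⟨PIdx.zeroOne hn, Nat.one_lt_two, rfl⟩
  have := isPrime_schubertIdeal (K := K) n 2
  rw [← Ideal.span_singleton_prime h0, ← Set.image_singleton, ← Ideal.map_span, ← hset]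
  have hmap : Ideal.map (Ideal.Quotient.mk (Ideal.span (pluckerSet K n)))
      (Ideal.span {P | ∃ p : PIdx n, p.1.2.val < 2 ∧ P = X p}) =
      Ideal.map (Ideal.Quotient.mk (Ideal.span (pluckerSet K n))) (schubertIdeal K n 2) := by
    rw [schubertIdeal, Ideal.span_union, Ideal.map_sup, Ideal.map_quotient_self, bot_sup_eq]
  rw [hmap]
  refine Ideal.map_isPrime_of_surjective Ideal.Quotient.mk_surjective ?_
  rw [Ideal.mk_ker]
  exact Ideal.span_mono Set.subset_union_left

theorem uniqueFactorizationMonoid_quotient_pluckerSet (hn : 2 ≤ n)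
    [IsDomain (MvPolynomial (PIdx n) K ⧸ Ideal.span (pluckerSet K n))] :
    UniqueFactorizationMonoid (MvPolynomial (PIdx n) K ⧸ Ideal.span (pluckerSet K n)) := by
  refine UniqueFactorizationMonoid.of_injective_of_exists_pow_mul (firstRowsHom K n).toRingHom
    (firstRowsHom_injective hn) (b := X ⟨PIdx.zeroOne hn, Nat.zero_lt_two⟩) ?_
    (exists_pow_mul_eq_firstRowsHom hn)
  exact (firstRowsHom_X (K := K) _).symm ▸ prime_mk_X_zeroOne hn

end Factoriality

/-- The homogeneous coordinate ring of the Grassmannian `G(2,n)`, i.e.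
`ℂ[T_{ij} : 1 ≤ i < j ≤ n]` modulo the Plücker ideal, is a UFD for `n ≥ 4`. -/
theorem stmt_13 (n : ℕ) (hn : 4 ≤ n) :
    IsDomain (MvPolynomial (PIdx n) ℂ ⧸ Ideal.span (pluckerSet ℂ n)) ∧
    ∀ (_ : IsDomain (MvPolynomial (PIdx n) ℂ ⧸ Ideal.span (pluckerSet ℂ n))),
      UniqueFactorizationMonoid (MvPolynomial (PIdx n) ℂ ⧸ Ideal.span (pluckerSet ℂ n)) := by
  exact ⟨isDomain_quotient_pluckerSet, fun _ ↦
    uniqueFactorizationMonoid_quotient_pluckerSet (by omega)⟩
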